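/- Assume the sequences are completely asynchronous, i.e., t¹_i ≠ t²_j for all i, j, and satisfy the boundary overlap conditions max(t¹_0, t²_0) < min(t¹_1, t²_1) and max(t¹_{M₁−1}, t²_{M₂−1}) < min(t¹_{M₁}, t²_{M₂}). Fix i with 1 < i < M₁, and define t²_{(i−1)+} := min{t²_v : t²_v > t¹_{i−1}} and t²_{i−} := max{t²_v : t²_v < t¹_i} (both sets are nonempty under the stated conditions). Then for every j with 1 < j < M₂ − 1 such that t¹_{i−1} < t²_j < t¹_i, the point t²_j is nonextant if and only if t²_{(i−1)+} < t²_j < t²_{i−}; i.e., the nonextant points of the second sequence lying between the consecutive observation times t¹_{i−1} and t¹_i are precisely those in the open interval (t²_{(i−1)+}, t²_{i−}). -/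

import Mathlib

open Classical in
/-- Indicator `χ(i,j)` of the event that the observation intervals
`(t¹_{i-1}, t¹_i]` and `(t²_{j-1}, t²_j]` overlap. -/
noncomputable def chi (t₁ t₂ : ℕ → ℝ) (i j : ℕ) : ℝ :=
  if (Set.Ioc (t₁ (i - 1)) (t₁ i) ∩ Set.Ioc (t₂ (j - 1)) (t₂ j)).Nonempty then 1 else 0

/-- The Hayashi–Yoshida double sum for price functions `P₁, P₂` and observation
times `t₁ 0 < ⋯ < t₁ M₁` and `t₂ 0 < ⋯ < t₂ M₂`. -/
noncomputable def HY (M₁ M₂ : ℕ) (t₁ t₂ : ℕ → ℝ) (P₁ P₂ : ℝ → ℝ) : ℝ :=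
  ∑ i ∈ Finset.Icc 1 M₁, ∑ j ∈ Finset.Icc 1 M₂,
    (P₁ (t₁ i) - P₁ (t₁ (i - 1))) * (P₂ (t₂ j) - P₂ (t₂ (j - 1))) * chi t₁ t₂ i j

/-- The observation time `t₂ j` is *nonextant* if the Hayashi–Yoshida sum does not
depend on the value of the second price function at `t₂ j`. -/
def Nonextant (M₁ M₂ : ℕ) (t₁ t₂ : ℕ → ℝ) (j : ℕ) : Prop :=
  ∀ P₁ P₂ P₂' : ℝ → ℝ, (∀ x : ℝ, x ≠ t₂ j → P₂' x = P₂ x) →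
    HY M₁ M₂ t₁ t₂ P₁ P₂ = HY M₁ M₂ t₁ t₂ P₁ P₂'

/-- Two observation intervals overlap iff each starts strictly before the other one ends. -/
lemma chi_eq_ite {t₁ t₂ : ℕ → ℝ} {i j : ℕ} (h₁ : t₁ (i - 1) < t₁ i) (h₂ : t₂ (j - 1) < t₂ j) :
    chi t₁ t₂ i j = if t₁ (i - 1) < t₂ j ∧ t₂ (j - 1) < t₁ i then 1 else 0 := by
  simp [chi, Set.Ioc_inter_Ioc, h₁, h₂, and_comm]

/-- The effect on the Hayashi–Yoshida sum of changing the second price function at one interior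
observation time. -/
lemma HY_sub_HY {M₁ M₂ : ℕ} {t₁ t₂ : ℕ → ℝ} (ht₂ : Set.InjOn t₂ (Set.Iic M₂)) {j : ℕ}
    (hj₁ : 0 < j) (hj₂ : j < M₂) (P₁ : ℝ → ℝ) {P₂ P₂' : ℝ → ℝ}
    (hP : ∀ x, x ≠ t₂ j → P₂' x = P₂ x) :
    HY M₁ M₂ t₁ t₂ P₁ P₂ - HY M₁ M₂ t₁ t₂ P₁ P₂' =
      ∑ k ∈ Finset.Icc 1 M₁, (P₁ (t₁ k) - P₁ (t₁ (k - 1))) * (P₂ (t₂ j) - P₂' (t₂ j)) *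
        (chi t₁ t₂ k j - chi t₁ t₂ k (j + 1)) := by
  have hd : ∀ l ≤ M₂, P₂ (t₂ l) - P₂' (t₂ l) = if l = j then P₂ (t₂ j) - P₂' (t₂ j) else 0 := by
    intro l hl
    split_ifs with h
    · rw [h]
    · rw [hP _ fun e => h (ht₂ hl hj₂.le e), sub_self]
  simp only [HY, ← Finset.sum_sub_distrib]
  refine Finset.sum_congr rfl fun k _ => ?_
  set δ := P₂ (t₂ j) - P₂' (t₂ j)
  set a := P₁ (t₁ k) - P₁ (t₁ (k - 1))
  have hsummand : ∀ l ∈ Finset.Icc 1 M₂,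
      a * (P₂ (t₂ l) - P₂ (t₂ (l - 1))) * chi t₁ t₂ k l -
        a * (P₂' (t₂ l) - P₂' (t₂ (l - 1))) * chi t₁ t₂ k l =
      (if l = j then a * δ * chi t₁ t₂ k l else 0) -
        (if l = j + 1 then a * δ * chi t₁ t₂ k l else 0) := by
    intro l hl
    rw [Finset.mem_Icc] at hl
    have h := hd l hl.2
    have h' := hd (l - 1) (by omega)
    have hiff : l - 1 = j ↔ l = j + 1 := by omega
    simp only [hiff] at h'
    calc _ = a * ((P₂ (t₂ l) - P₂' (t₂ l)) - (P₂ (t₂ (l - 1)) - P₂' (t₂ (l - 1)))) *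
          chi t₁ t₂ k l := by ring
      _ = _ := by rw [h, h']; split_ifs <;> ring
  rw [Finset.sum_congr rfl hsummand, Finset.sum_sub_distrib, Finset.sum_ite_eq',
    Finset.sum_ite_eq', if_pos (Finset.mem_Icc.2 ⟨by omega, by omega⟩),
    if_pos (Finset.mem_Icc.2 ⟨by omega, by omega⟩)]
  ring

/-- An interior observation time is nonextant iff the two observation intervals adjacent to it
overlap the same intervals of the first sequence. -/
lemma nonextant_iff_chi_eq {M₁ M₂ : ℕ} {t₁ t₂ : ℕ → ℝ} (ht₁ : StrictMonoOn t₁ (Set.Iic M₁))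
    (ht₂ : Set.InjOn t₂ (Set.Iic M₂)) {j : ℕ} (hj₁ : 0 < j) (hj₂ : j < M₂) :
    Nonextant M₁ M₂ t₁ t₂ j ↔
      ∀ k ∈ Finset.Icc 1 M₁, chi t₁ t₂ k j = chi t₁ t₂ k (j + 1) := by
  constructor
  · intro h k hk
    classical
    have hk' := Finset.mem_Icc.1 hk
    have hP : ∀ x, x ≠ t₂ j → (0 : ℝ → ℝ) x = (Pi.single (t₂ j) 1 : ℝ → ℝ) x := by
      intro x hx
      simp [hx]
    have hincr : ∀ l ∈ Finset.Icc 1 M₁,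
        ((Set.Ici (t₁ k)).indicator 1 (t₁ l) : ℝ) -
          (Set.Ici (t₁ k)).indicator 1 (t₁ (l - 1)) = if l = k then 1 else 0 := by
      intro l hl
      rw [Finset.mem_Icc] at hl
      have e₁ : t₁ k ≤ t₁ l ↔ k ≤ l := ht₁.le_iff_le hk'.2 hl.2
      have e₂ : t₁ k ≤ t₁ (l - 1) ↔ k ≤ l - 1 :=
        ht₁.le_iff_le hk'.2 ((Nat.sub_le _ _).trans hl.2)
      simp only [Set.indicator_apply, Set.mem_Ici, e₁, e₂, Pi.one_apply]
      split_ifs <;> first | omega | norm_num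
    have hHY := HY_sub_HY (t₁ := t₁) (M₁ := M₁) ht₂ hj₁ hj₂
      ((Set.Ici (t₁ k)).indicator 1) hP
    rw [h _ _ _ hP, sub_self, Finset.sum_congr rfl fun l hl => by rw [hincr l hl]] at hHY
    simp only [ite_mul, one_mul, zero_mul, Finset.sum_ite_eq', if_pos hk] at hHY
    simpa [eq_comm, sub_eq_zero] using hHY
  · intro h P₁ P₂ P₂' hP
    rw [← sub_eq_zero, HY_sub_HY ht₂ hj₁ hj₂ P₁ hP]
    exact Finset.sum_eq_zero fun k hk => by rw [h k hk, sub_self, mul_zero]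

/-- Under complete asynchrony and the boundary overlap conditions, fix
`1 < i < M₁`, and let `tp = t²_{(i-1)+}` be the smallest observation time of the
second sequence exceeding `t¹_{i-1}` and `tm = t²_{i-}` the largest one below
`t¹_i`. Then for every `1 < j < M₂ - 1` with `t¹_{i-1} < t²_j < t¹_i`, the point
`t²_j` is nonextant iff `tp < t²_j < tm`. -/
theorem nonextant_iff_strictly_between_bracketing_points
    (M₁ M₂ : ℕ) (hM₁ : 1 ≤ M₁) (hM₂ : 1 ≤ M₂) (t₁ t₂ : ℕ → ℝ)
    (ht₁ : ∀ i < M₁, t₁ i < t₁ (i + 1)) (ht₂ : ∀ j < M₂, t₂ j < t₂ (j + 1))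
    (hasync : ∀ i ≤ M₁, ∀ j ≤ M₂, t₁ i ≠ t₂ j)
    (hinit : max (t₁ 0) (t₂ 0) < min (t₁ 1) (t₂ 1))
    (hterm : max (t₁ (M₁ - 1)) (t₂ (M₂ - 1)) < min (t₁ M₁) (t₂ M₂))
    (i : ℕ) (hi1 : 1 < i) (hi2 : i < M₁)
    (tp tm : ℝ)
    (htp : IsLeast {x : ℝ | ∃ v ≤ M₂, t₂ v = x ∧ t₁ (i - 1) < x} tp)
    (htm : IsGreatest {x : ℝ | ∃ v ≤ M₂, t₂ v = x ∧ x < t₁ i} tm)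
    (j : ℕ) (hj1 : 1 < j) (hj2 : j < M₂ - 1)
    (hbetween : t₁ (i - 1) < t₂ j ∧ t₂ j < t₁ i) :
    Nonextant M₁ M₂ t₁ t₂ j ↔ tp < t₂ j ∧ t₂ j < tm := by
  have hmono₁ := strictMonoOn_Iic_of_lt_succ ht₁
  have hmono₂ := strictMonoOn_Iic_of_lt_succ ht₂
  have hlt₁ : ∀ k ∈ Finset.Icc 1 M₁, t₁ (k - 1) < t₁ k := fun k hk => by
    rw [Finset.mem_Icc] at hk
    exact hmono₁ ((Nat.sub_le _ _).trans hk.2) hk.2 (by omega)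
  have hj : t₂ (j - 1) < t₂ j :=
    hmono₂ (Set.mem_Iic.2 (by omega)) (Set.mem_Iic.2 (by omega)) (by omega)
  have hj' : t₂ j < t₂ (j + 1) := ht₂ j (by omega)
  have hchi : ∀ k ∈ Finset.Icc 1 M₁, chi t₁ t₂ k j =
      if t₁ (k - 1) < t₂ j ∧ t₂ (j - 1) < t₁ k then 1 else 0 := fun k hk =>
    chi_eq_ite (hlt₁ k hk) hj
  have hchi' : ∀ k ∈ Finset.Icc 1 M₁, chi t₁ t₂ k (j + 1) =
      if t₁ (k - 1) < t₂ (j + 1) ∧ t₂ j < t₁ k then 1 else 0 := fun k hk =>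
    chi_eq_ite (hlt₁ k hk) hj'
  have htp_iff : tp < t₂ j ↔ t₁ (i - 1) < t₂ (j - 1) := by
    constructor
    · intro h
      obtain ⟨v, hv, rfl, hlt⟩ := htp.1
      have hvj : v < j := (hmono₂.lt_iff_lt hv (Set.mem_Iic.2 (by omega))).1 h
      exact hlt.trans_le (hmono₂.monotoneOn hv (Set.mem_Iic.2 (by omega)) (by omega))
    · intro h
      exact (htp.2 ⟨j - 1, by omega, rfl, h⟩).trans_lt hj
  have htm_iff : t₂ j < tm ↔ t₂ (j + 1) < t₁ i := by
    constructor
    · intro h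
      obtain ⟨v, hv, rfl, hlt⟩ := htm.1
      have hjv : j < v := (hmono₂.lt_iff_lt (Set.mem_Iic.2 (by omega)) hv).1 h
      exact (hmono₂.monotoneOn (Set.mem_Iic.2 (by omega)) hv hjv).trans_lt hlt
    · intro h
      exact hj'.trans_le (htm.2 ⟨j + 1, by omega, rfl, h⟩)
  rw [nonextant_iff_chi_eq hmono₁ hmono₂.injOn (by omega) (by omega), htp_iff, htm_iff]
  constructor
  · intro h
    constructor
    · by_contra! hle
      have hlt := lt_of_le_of_ne hle (hasync (i - 1) (by omega) (j - 1) (by omega)).symm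
      have hmem : i - 1 ∈ Finset.Icc 1 M₁ := Finset.mem_Icc.2 ⟨by omega, by omega⟩
      have heq := h _ hmem
      rw [hchi _ hmem, hchi' _ hmem, if_pos ⟨(hlt₁ _ hmem).trans hbetween.1, hlt⟩,
        if_neg fun hc => hc.2.not_gt hbetween.1] at heq
      exact one_ne_zero heq
    · by_contra! hle
      have hlt := lt_of_le_of_ne hle (hasync i (by omega) (j + 1) (by omega))
      have hmem : i + 1 ∈ Finset.Icc 1 M₁ := Finset.mem_Icc.2 ⟨by omega, by omega⟩
      have heq := h _ hmem
      rw [hchi _ hmem, hchi' _ hmem, Nat.add_sub_cancel,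
        if_neg fun hc => hc.1.not_gt hbetween.2,
        if_pos ⟨hlt, hbetween.2.trans (ht₁ i hi2)⟩] at heq
      exact zero_ne_one heq
  · rintro ⟨hleft, hright⟩ k hk
    rw [hchi k hk, hchi' k hk]
    have hk' := Finset.mem_Icc.1 hk
    rcases lt_trichotomy k i with hki | rfl | hki
    · have hle : t₁ k ≤ t₁ (i - 1) :=
        hmono₁.monotoneOn hk'.2 (Set.mem_Iic.2 (by omega)) (by omega)
      rw [if_neg fun hc => by linarith [hc.2], if_neg fun hc => by linarith [hc.2]]
    · rw [if_pos ⟨hbetween.1, hj.trans hbetween.2⟩, if_pos ⟨hbetween.1.trans hj', hbetween.2⟩]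
    · have hle : t₁ i ≤ t₁ (k - 1) :=
        hmono₁.monotoneOn hi2.le (Set.mem_Iic.2 (by omega)) (by omega)
      rw [if_neg fun hc => by linarith [hc.1], if_neg fun hc => by linarith [hc.1]]
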